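/- For every s ∈ ℂ, Hajja's s-median operator satisfies M^{00/12}[sω + (1−s)ω², sω² + (1−s)ω] = S[s+ω, s+ω²] = J² + s·((2/3)I − (1/3)J − (1/3)J²). -/

import Mathlib

noncomputable def ω : ℂ := Complex.exp (2 * Real.pi * Complex.I / 3)

def J : Matrix (Fin 3) (Fin 3) ℂ := !![0,1,0; 0,0,1; 1,0,0]

noncomputable def W : Matrix (Fin 3) (Fin 3) ℂ := !![1,1,1; 1,ω,ω^2; 1,ω^2,ω]

/-- generalized cevian operator `S[η,η'] = W ⬝ diag(1,η',η) ⬝ W⁻¹` -/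
noncomputable def S (η η' : ℂ) : Matrix (Fin 3) (Fin 3) ℂ :=
  W * Matrix.diagonal ![1, η', η] * W⁻¹

/-- `ω^k` for `k : ZMod 3` (well defined since `ω^3 = 1`). -/
noncomputable def ωz (k : ZMod 3) : ℂ := ω ^ k.val

/-- `J^k` for `k : ZMod 3` (well defined since `J^3 = 1`). -/
def Jz (k : ZMod 3) : Matrix (Fin 3) (Fin 3) ℂ := J ^ k.val

/-- generalized median operator `M^{wx/yz}[η,η']` -/
noncomputable def M (η η' : ℂ) (w x y z : ZMod 3) : Matrix (Fin 3) (Fin 3) ℂ :=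
  S ((η * ωz (-x) - ωz (-w)) / (ωz (-z) - ωz (-y)))
    ((η' * ωz x - ωz w) / (ωz z - ωz y))

theorem isPrimitiveRoot_ω : IsPrimitiveRoot ω 3 := by
  simpa [ω] using Complex.isPrimitiveRoot_exp 3 (by norm_num)

theorem ω_cube : ω ^ 3 = 1 := isPrimitiveRoot_ω.pow_eq_one

theorem one_add_ω_add_ω_sq : 1 + ω + ω ^ 2 = 0 := by
  simpa [Finset.sum_range_succ] using isPrimitiveRoot_ω.geom_sum_eq_zero (by norm_num)

theorem ω_sub_ω_sq_ne_zero : ω - ω ^ 2 ≠ 0 := by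
  have h : ω - ω ^ 2 = ω * (1 - ω) := by ring
  rw [h]
  exact mul_ne_zero (isPrimitiveRoot_ω.ne_zero (by norm_num))
    (sub_ne_zero.mpr (isPrimitiveRoot_ω.ne_one (by norm_num)).symm)

/-- Up to the factor `1/3`, the inverse of the Fourier matrix `W` is its conjugate. -/
theorem W_mul_conj :
    W * ((1 / 3 : ℂ) • !![1, 1, 1; 1, ω ^ 2, ω; 1, ω, ω ^ 2]) = 1 := by
  have h := one_add_ω_add_ω_sq
  have h3 := ω_cube
  ext i j
  fin_cases i <;> fin_cases j <;> simp [W, Matrix.mul_apply, Fin.sum_univ_three] <;> grind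

/-- A matrix that acts on the columns of `W` with eigenvalues `1, η', η` is `S[η,η']`. -/
theorem S_eq_of_mul_W {η η' : ℂ} {A : Matrix (Fin 3) (Fin 3) ℂ}
    (h : A * W = W * Matrix.diagonal ![1, η', η]) : S η η' = A := by
  have hW : W * W⁻¹ = 1 := by rw [Matrix.inv_eq_right_inv W_mul_conj, W_mul_conj]
  rw [S, ← h, Matrix.mul_assoc, hW, Matrix.mul_one]

theorem hajja_median_formula (s : ℂ) :
    M (s * ω + (1 - s) * ω ^ 2) (s * ω ^ 2 + (1 - s) * ω) 0 0 1 2 = S (s + ω) (s + ω ^ 2) ∧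
    S (s + ω) (s + ω ^ 2) =
      J ^ 2 + s • ((2/3 : ℂ) • (1 : Matrix (Fin 3) (Fin 3) ℂ) - (1/3 : ℂ) • J - (1/3 : ℂ) • J ^ 2) := by
  have h := one_add_ω_add_ω_sq
  have h3 := ω_cube
  constructor
  · have hd := ω_sub_ω_sq_ne_zero
    have hd' : ω ^ 2 - ω ≠ 0 := by rwa [← neg_sub, neg_ne_zero]
    have z0 : ωz 0 = 1 := pow_zero ω
    have z1 : ωz 1 = ω := pow_one ω
    have z2 : ωz 2 = ω ^ 2 := rfl
    have n1 : (-1 : ZMod 3) = 2 := rfl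
    have n2 : (-2 : ZMod 3) = 1 := rfl
    rw [M, neg_zero, n1, n2, z0, z1, z2]
    congr 1
    · rw [div_eq_iff hd]
      linear_combination h3
    · rw [div_eq_iff hd']
      linear_combination (1 - ω) * h3
  · apply S_eq_of_mul_W
    ext i j
    fin_cases i <;> fin_cases j <;>
      simp [W, J, pow_two, Matrix.mul_apply, Fin.sum_univ_three, Matrix.one_apply] <;> grind
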